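/- For every positive integer m and every (z₁,z₂) ∈ ℂ², the family (|z₁|^{2j}|z₂|^{2k} / N_m(j,k)) indexed by pairs of nonnegative integers (j,k) with j+k ≥ m is summable; i.e., the series defining the Rawnsley ε-function of m·g_EH converges at every point. -/

import Mathlib

open MeasureTheory

/-- The weight `w_m(z) = exp(-m√(u²+1)) · ((1+√(u²+1))/u)^m` with `u = |z₁|² + |z₂|²`. -/
noncomputable def wEH (m : ℕ) (z : ℂ × ℂ) : ℝ :=
  Real.exp (-(m * Real.sqrt ((‖z.1‖ ^ 2 + ‖z.2‖ ^ 2) ^ 2 + 1))) *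
    ((1 + Real.sqrt ((‖z.1‖ ^ 2 + ‖z.2‖ ^ 2) ^ 2 + 1)) /
      (‖z.1‖ ^ 2 + ‖z.2‖ ^ 2)) ^ m

/-- `(1/π²)` times the Lebesgue measure on `ℂ² ≅ ℝ⁴`. -/
noncomputable def muEH : Measure (ℂ × ℂ) :=
  (ENNReal.ofReal (1 / Real.pi ^ 2)) • volume

/-- The weighted norm `N_m(j,k) = ∫ w_m(z) |z₁|^{2j} |z₂|^{2k} dμ(z)`. -/
noncomputable def NEH (m j k : ℕ) : ENNReal :=
  ∫⁻ z : ℂ × ℂ,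
    ENNReal.ofReal (wEH m z * ‖z.1‖ ^ (2 * j) * ‖z.2‖ ^ (2 * k)) ∂muEH

/-!
The weight enters only through the fact that `w_m μ` charges every nonempty open set. For any such
measure `ν` on `ℂ²` and any `R > max |z₁| |z₂|`, the set `{|ζ₁| ≥ R, |ζ₂| ≥ R}` has positive
measure `c`, so Markov's inequality bounds the moment `∫ |ζ₁|^j |ζ₂|^k dν` below by `c R^(j+k)`.
The family `|z₁|^j |z₂|^k / ∫ |ζ₁|^j |ζ₂|^k dν`, of which the ε-series picks terms with even
exponents, is then dominated by a multiple of the product of the geometric series with ratios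
`|z₁|/R` and `|z₂|/R`.
-/

open scoped ENNReal

section Moments

variable {α : Type*} [MeasurableSpace α] {μ : Measure α} {f g : α → ℝ≥0∞} {a b R : ℝ≥0∞}

lemma tsum_pow_mul_pow_ne_top (ha : a < 1) (hb : b < 1) :
    ∑' p : ℕ × ℕ, a ^ p.1 * b ^ p.2 ≠ ∞ := by
  simp only [ENNReal.tsum_prod', ENNReal.tsum_mul_left, ENNReal.tsum_mul_right,
    ENNReal.tsum_geometric]
  exact ENNReal.mul_ne_top (ENNReal.inv_ne_top.2 (tsub_pos_of_lt ha).ne')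
    (ENNReal.inv_ne_top.2 (tsub_pos_of_lt hb).ne')

lemma pow_mul_pow_mul_measure_le_lintegral (hf : AEMeasurable f μ) (hg : AEMeasurable g μ)
    (R : ℝ≥0∞) (j k : ℕ) :
    R ^ j * R ^ k * μ {x | R ≤ f x ∧ R ≤ g x} ≤ ∫⁻ x, f x ^ j * g x ^ k ∂μ :=
  calc R ^ j * R ^ k * μ {x | R ≤ f x ∧ R ≤ g x}
      ≤ R ^ j * R ^ k * μ {x | R ^ j * R ^ k ≤ f x ^ j * g x ^ k} := by
        gcongr with x
        rintro ⟨hRf, hRg⟩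
        gcongr
    _ ≤ ∫⁻ x, f x ^ j * g x ^ k ∂μ :=
        mul_meas_ge_le_lintegral₀ ((hf.pow_const j).mul (hg.pow_const k)) _

lemma pow_mul_pow_div_lintegral_le (hf : AEMeasurable f μ) (hg : AEMeasurable g μ) (hR : R ≠ 0)
    (hμ : μ {x | R ≤ f x ∧ R ≤ g x} ≠ 0) (j k : ℕ) :
    a ^ j * b ^ k / ∫⁻ x, f x ^ j * g x ^ k ∂μ ≤
      (a / R) ^ j * (b / R) ^ k * (μ {x | R ≤ f x ∧ R ≤ g x})⁻¹ :=
  calc a ^ j * b ^ k / ∫⁻ x, f x ^ j * g x ^ k ∂μ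
      ≤ a ^ j * b ^ k / (R ^ j * R ^ k * μ {x | R ≤ f x ∧ R ≤ g x}) := by
        gcongr
        exact pow_mul_pow_mul_measure_le_lintegral hf hg R j k
    _ = (a / R) ^ j * (b / R) ^ k * (μ {x | R ≤ f x ∧ R ≤ g x})⁻¹ := by
        have hRj : R ^ j ≠ 0 := pow_ne_zero j hR
        have hRk : R ^ k ≠ 0 := pow_ne_zero k hR
        simp only [div_eq_mul_inv, mul_pow]
        rw [ENNReal.mul_inv (.inl (mul_ne_zero hRj hRk)) (.inr hμ),
          ENNReal.mul_inv (.inl hRj) (.inr hRk), ENNReal.inv_pow, ENNReal.inv_pow]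
        ring

lemma tsum_pow_mul_pow_div_lintegral_ne_top (hf : AEMeasurable f μ) (hg : AEMeasurable g μ)
    (ha : a < R) (hb : b < R) (hμ : μ {x | R ≤ f x ∧ R ≤ g x} ≠ 0) :
    ∑' p : ℕ × ℕ, a ^ p.1 * b ^ p.2 / ∫⁻ x, f x ^ p.1 * g x ^ p.2 ∂μ ≠ ∞ := by
  have ha' : a / R < 1 := ENNReal.div_lt_of_lt_mul (by rwa [one_mul])
  have hb' : b / R < 1 := ENNReal.div_lt_of_lt_mul (by rwa [one_mul])
  refine ne_top_of_le_ne_top ?_ (ENNReal.tsum_le_tsum fun p ↦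
    pow_mul_pow_div_lintegral_le hf hg (pos_of_gt ha).ne' hμ p.1 p.2)
  rw [ENNReal.tsum_mul_right]
  exact ENNReal.mul_ne_top (tsum_pow_mul_pow_ne_top ha' hb') (ENNReal.inv_ne_top.2 hμ)

end Moments

section OpenPos

variable {E F : Type*} [NormedAddCommGroup E] [NormedSpace ℝ E] [Nontrivial E]
  [NormedAddCommGroup F] [NormedSpace ℝ F] [Nontrivial F]
  [MeasurableSpace E] [MeasurableSpace F]

lemma measure_le_enorm_fst_and_le_enorm_snd_ne_zero (μ : Measure (E × F)) [μ.IsOpenPosMeasure]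
    {R : ℝ≥0∞} (hR : R ≠ ∞) : μ {x | R ≤ ‖x.1‖ₑ ∧ R ≤ ‖x.2‖ₑ} ≠ 0 := by
  have hopen : IsOpen {x : E × F | R < ‖x.1‖ₑ ∧ R < ‖x.2‖ₑ} :=
    (isOpen_lt continuous_const continuous_fst.enorm).inter
      (isOpen_lt continuous_const continuous_snd.enorm)
  obtain ⟨x, hx⟩ := NormedSpace.exists_lt_norm ℝ E R.toReal
  obtain ⟨y, hy⟩ := NormedSpace.exists_lt_norm ℝ F R.toReal
  have hne : {x : E × F | R < ‖x.1‖ₑ ∧ R < ‖x.2‖ₑ}.Nonempty := by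
    refine ⟨(x, y), ?_, ?_⟩ <;>
      rwa [← ofReal_norm, ENNReal.lt_ofReal_iff_toReal_lt hR]
  have hsub : {x : E × F | R < ‖x.1‖ₑ ∧ R < ‖x.2‖ₑ} ⊆ {x | R ≤ ‖x.1‖ₑ ∧ R ≤ ‖x.2‖ₑ} :=
    fun _ hx ↦ ⟨hx.1.le, hx.2.le⟩
  exact ((hopen.measure_pos μ hne).trans_le (measure_mono hsub)).ne'

theorem tsum_enorm_pow_mul_enorm_pow_div_lintegral_ne_top [OpensMeasurableSpace E]
    [OpensMeasurableSpace F] (μ : Measure (E × F)) [μ.IsOpenPosMeasure] (x : E × F) :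
    ∑' p : ℕ × ℕ, ‖x.1‖ₑ ^ p.1 * ‖x.2‖ₑ ^ p.2 /
      ∫⁻ y, ‖y.1‖ₑ ^ p.1 * ‖y.2‖ₑ ^ p.2 ∂μ ≠ ∞ := by
  obtain ⟨R, hxR, hR⟩ := exists_between (max_lt (enorm_lt_top (x := x.1)) (enorm_lt_top (x := x.2)))
  exact tsum_pow_mul_pow_div_lintegral_ne_top measurable_fst.enorm.aemeasurable
    measurable_snd.enorm.aemeasurable ((le_max_left _ _).trans_lt hxR)
    ((le_max_right _ _).trans_lt hxR) (measure_le_enorm_fst_and_le_enorm_snd_ne_zero μ hR.ne)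

end OpenPos

lemma wEH_nonneg (m : ℕ) (z : ℂ × ℂ) : 0 ≤ wEH m z := by
  unfold wEH
  positivity

lemma wEH_pos (m : ℕ) {z : ℂ × ℂ} (hz : z ≠ 0) : 0 < wEH m z := by
  have hu : 0 < ‖z.1‖ ^ 2 + ‖z.2‖ ^ 2 := by
    rcases not_and_or.1 (mt Prod.ext_iff.2 hz) with h | h <;>
    · have := norm_pos_iff.2 h
      positivity
  unfold wEH
  positivity

lemma measurable_wEH (m : ℕ) : Measurable (wEH m) := by
  unfold wEH
  fun_prop

instance : muEH.IsOpenPosMeasure :=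
  Measure.isOpenPosMeasure_smul volume (ENNReal.ofReal_pos.2 (by positivity)).ne'

instance : NullSingletonClass muEH where
  measure_singleton z := by
    rw [muEH, Measure.volume_eq_prod, Measure.smul_apply, measure_singleton, smul_zero]

/-- The measure `w_m μ` on `ℂ²`, whose moments are the `N_m(j,k)`. -/
noncomputable def weightedMuEH (m : ℕ) : Measure (ℂ × ℂ) :=
  muEH.withDensity fun z ↦ ENNReal.ofReal (wEH m z)

lemma muEH_absolutelyContinuous_weightedMuEH (m : ℕ) : muEH ≪ weightedMuEH m := by
  refine withDensity_absolutelyContinuous' (measurable_wEH m).ennreal_ofReal.aemeasurable ?_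
  filter_upwards [Measure.ae_ne muEH 0] with z hz
  exact (ENNReal.ofReal_pos.2 (wEH_pos m hz)).ne'

instance (m : ℕ) : (weightedMuEH m).IsOpenPosMeasure :=
  (muEH_absolutelyContinuous_weightedMuEH m).isOpenPosMeasure

lemma NEH_eq_lintegral_weightedMuEH (m j k : ℕ) :
    NEH m j k = ∫⁻ z, ‖z.1‖ₑ ^ (2 * j) * ‖z.2‖ₑ ^ (2 * k) ∂weightedMuEH m := by
  rw [weightedMuEH, lintegral_withDensity_eq_lintegral_mul _ (measurable_wEH m).ennreal_ofReal
    (by fun_prop), NEH]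
  refine lintegral_congr fun z ↦ ?_
  rw [Pi.mul_apply, mul_assoc, ENNReal.ofReal_mul (wEH_nonneg m z),
    ENNReal.ofReal_mul (by positivity), ENNReal.ofReal_pow (norm_nonneg _),
    ENNReal.ofReal_pow (norm_nonneg _), ofReal_norm, ofReal_norm]

/-- For every positive integer `m` and every point `z ∈ ℂ²`, the family
`(|z₁|^{2j}|z₂|^{2k}/N_m(j,k))_{j+k ≥ m}` is summable: the series defining the Rawnsley
ε-function of `m·g_EH` converges at every point. -/
theorem epsilon_series_summable (m : ℕ) (hm : 0 < m) (z : ℂ × ℂ) :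
    Summable (fun p : {p : ℕ × ℕ // m ≤ p.1 + p.2} =>
      ‖z.1‖ ^ (2 * (p : ℕ × ℕ).1) * ‖z.2‖ ^ (2 * (p : ℕ × ℕ).2) /
        (NEH m (p : ℕ × ℕ).1 (p : ℕ × ℕ).2).toReal) := by
  have hdouble : Function.Injective fun p : {p : ℕ × ℕ // m ≤ p.1 + p.2} ↦
      (2 * (p : ℕ × ℕ).1, 2 * (p : ℕ × ℕ).2) := by
    rintro ⟨⟨j, k⟩, _⟩ ⟨⟨j', k'⟩, _⟩ h
    simpa using h
  have hsum := (ENNReal.summable_toReal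
    (tsum_enorm_pow_mul_enorm_pow_div_lintegral_ne_top (weightedMuEH m) z)).comp_injective hdouble
  refine hsum.congr fun p ↦ ?_
  -- `x / ∞ = 0` in `ℝ≥0∞` matches `x / ∞.toReal = x / 0 = 0` in `ℝ`.
  simp only [Function.comp_apply, ← NEH_eq_lintegral_weightedMuEH, ENNReal.toReal_div,
    ENNReal.toReal_mul, ENNReal.toReal_pow, toReal_enorm]
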